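/- Let α, β, c ∈ (1,∞), T ∈ (0,∞), let (Ω, 𝓕, (𝓕_t)_{t∈[0,T]}, P) be a filtered probability space, let W : [0,T]×Ω → ℝ be a standard (𝓕_t)-Brownian motion, let ξ : Ω → ℝ be 𝓕_0/Borel-measurable, let μ, σ : ℝ → ℝ be Borel-measurable, and for N ∈ ℕ = {1,2,3,...} let Y^N_n : Ω → ℝ, n ∈ {0,1,...,N}, satisfy Y^N_0 = ξ and Y^N_{n+1} = Y^N_n + (T/N)·μ(Y^N_n) + σ(Y^N_n)·(W_{(n+1)T/N} − W_{nT/N}) for n ∈ {0,1,...,N−1}. Assume that for all x ∈ (−∞,−c] ∪ [c,∞) it holds that |μ(x)| + |σ(x)| ≥ |x|^α / c, and assume that either P(σ(ξ) ≠ 0) > 0 or for all x ∈ [1,∞) it holds that P(|ξ| ≥ x) ≥ β^{(−x^β)}. Then for every p ∈ (0,∞) it holds that lim_{N→∞} E[|Y^N_N|^p] = ∞. -/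

import Mathlib

open MeasureTheory ProbabilityTheory Real
open scoped ENNReal

lemma gauss_Ici (v : NNReal) (hv : 0 < v) (y : ℝ) (hy : 0 ≤ y) :
    ENNReal.ofReal ((√(2 * π))⁻¹ * rexp (-(y ^ 2 / v + 1))) ≤ gaussianReal 0 v (Set.Ici y) := by
  have hv' : (0:ℝ) < v := by exact_mod_cast hv
  have hs : 0 < √(v:ℝ) := Real.sqrt_pos.2 hv'
  rw [gaussianReal_apply 0 hv.ne']
  calc ENNReal.ofReal ((√(2 * π))⁻¹ * rexp (-(y ^ 2 / v + 1)))
      = ∫⁻ x in Set.Icc y (y + √(v:ℝ)),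
          ENNReal.ofReal ((√(2 * π * v))⁻¹ * rexp (-(y ^ 2 / v + 1))) := by
        rw [lintegral_const, Measure.restrict_apply MeasurableSet.univ, Set.univ_inter,
          Real.volume_Icc, ← ENNReal.ofReal_mul (by positivity)]
        congr 1
        rw [Real.sqrt_mul (by positivity) (v:ℝ)]
        field_simp
        ring
    _ ≤ ∫⁻ x in Set.Icc y (y + √(v:ℝ)), gaussianPDF 0 v x := by
        apply setLIntegral_mono' measurableSet_Icc
        intro x hx
        rw [gaussianPDF, gaussianPDFReal]
        apply ENNReal.ofReal_le_ofReal
        gcongr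
        rw [neg_div, neg_le_neg_iff, sub_zero]
        have h1 : x ^ 2 ≤ 2 * y ^ 2 + 2 * v := by
          have h2 : √(v:ℝ) ^ 2 = v := Real.sq_sqrt hv'.le
          have h3 : x ^ 2 ≤ (y + √(v:ℝ)) ^ 2 := by
            have := hx.1
            have := hx.2
            gcongr
            linarith
          nlinarith [sq_nonneg (y - √(v:ℝ))]
        rw [div_le_iff₀ (by positivity)]
        field_simp
        linarith
    _ ≤ _ := lintegral_mono_set Set.Icc_subset_Ici_self

lemma gauss_Iic (v : NNReal) (hv : 0 < v) (y : ℝ) (hy : 0 ≤ y) :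
    ENNReal.ofReal ((√(2 * π))⁻¹ * rexp (-(y ^ 2 / v + 1))) ≤ gaussianReal 0 v (Set.Iic (-y)) := by
  refine (gauss_Ici v hv y hy).trans (le_of_eq ?_)
  have h := gaussianReal_map_neg (μ := 0) (v := v)
  rw [neg_zero] at h
  conv_lhs => rw [← h]
  rw [Measure.map_apply measurable_neg measurableSet_Ici]
  congr 1
  ext x
  simp

lemma one_step {Ω : Type*} (m : MeasurableSpace Ω) [mΩ : MeasurableSpace Ω] (P : Measure Ω)
    [IsProbabilityMeasure P] (hm : m ≤ mΩ) (Δ a s : Ω → ℝ) (hΔ : Measurable Δ)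
    (hind : Indep (MeasurableSpace.comap Δ inferInstance) m P)
    (v : NNReal) (hv : 0 < v) (hlaw : P.map Δ = gaussianReal 0 v)
    (ha : Measurable[m] a) (hs : Measurable[m] s) (A : Set Ω) (hA : MeasurableSet[m] A)
    (y : ℝ) (hy : 0 ≤ y) :
    ENNReal.ofReal ((√(2 * π))⁻¹ * rexp (-(y ^ 2 / v + 1))) * P A ≤
      P {ω | ω ∈ A ∧ |a ω| + |s ω| * y ≤ |a ω + s ω * Δ ω|} := by
  set G := ENNReal.ofReal ((√(2 * π))⁻¹ * rexp (-(y ^ 2 / v + 1)))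
  let B : Set Ω := {ω | 0 ≤ a ω * s ω}
  have hB : MeasurableSet[m] B := by
    have : Measurable[m] (fun ω => a ω * s ω) := ha.mul hs
    exact this measurableSet_Ici
  have key : ∀ (S : Set ℝ) (C : Set Ω), MeasurableSet S → MeasurableSet[m] C →
      G ≤ gaussianReal 0 v S → G * P C ≤ P (Δ ⁻¹' S ∩ C) := by
    intro S C hS hC hG
    have := (Indep_iff _ _ _).1 hind (Δ ⁻¹' S) C ⟨S, hS, rfl⟩ hC
    rw [this, ← Measure.map_apply hΔ hS, hlaw]
    gcongr
  have h1 := key (Set.Ici y) (A ∩ B) measurableSet_Ici (hA.inter hB) (gauss_Ici v hv y hy)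
  have h2 := key (Set.Iic (-y)) (A \ B) measurableSet_Iic (hA.diff hB) (gauss_Iic v hv y hy)
  calc G * P A = G * P (A ∩ B) + G * P (A \ B) := by
        rw [← mul_add, measure_inter_add_sdiff A (hm _ hB)]
    _ ≤ P (Δ ⁻¹' (Set.Ici y) ∩ (A ∩ B)) + P (Δ ⁻¹' (Set.Iic (-y)) ∩ (A \ B)) := add_le_add h1 h2
    _ = P ((Δ ⁻¹' (Set.Ici y) ∩ (A ∩ B)) ∪ (Δ ⁻¹' (Set.Iic (-y)) ∩ (A \ B))) := by
        rw [measure_union]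
        · rw [Set.disjoint_left]
          rintro ω ⟨_, _, h⟩ ⟨_, _, h'⟩
          exact h' h
        · exact (hΔ measurableSet_Iic).inter (hm _ (hA.diff hB))
    _ ≤ _ := by
        apply measure_mono
        have aux : ∀ a s d : ℝ, 0 ≤ a * (s * d) → y ≤ |d| → |a| + |s| * y ≤ |a + s * d| := by
          intro a s d h hd
          have : |a + s * d| = |a| + |s * d| := by
            rw [abs_add_eq_add_abs_iff]
            rcases mul_nonneg_iff.1 h with h | h
            · exact Or.inl h
            · exact Or.inr h
          rw [this, abs_mul]
          gcongr
        rintro ω (⟨h, hA, hB⟩ | ⟨h, hA, hB⟩)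
        · refine ⟨hA, aux _ _ _ ?_ (le_trans h (le_abs_self _))⟩
          rw [← mul_assoc]
          exact mul_nonneg hB (le_trans hy h)
        · have h : Δ ω ≤ -y := h
          refine ⟨hA, aux _ _ _ ?_ (le_trans (by linarith) (neg_le_abs _))⟩
          rw [← mul_assoc]
          have hB : ¬ (0 ≤ a ω * s ω) := hB
          exact mul_nonneg_of_nonpos_of_nonpos (by linarith) (by linarith)

lemma final_limit (θ a q δ γ : ℝ) (k : ℕ) (hθ : 0 < θ) (hq : 0 < q) (hδ : 0 < δ) (hγ : 1 < γ) :
    Filter.Tendsto (fun M : ℕ => θ * rexp (-(a * ((M:ℝ) + 1) ^ k)) * q ^ M * rexp (δ * γ ^ M))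
      Filter.atTop Filter.atTop := by
  have h0 : ∀ j : ℕ, Filter.Tendsto (fun M : ℕ => ((M:ℝ) + 1) ^ j / γ ^ (M + 1)) Filter.atTop (nhds 0) := by
    intro j
    have := (tendsto_pow_const_div_const_pow_of_one_lt j hγ).comp (Filter.tendsto_add_atTop_nat 1)
    refine this.congr fun M => ?_
    simp
  have h1 : Filter.Tendsto (fun M : ℕ => (δ / γ + (-a) * (((M:ℝ) + 1) ^ k / γ ^ (M + 1))
      + Real.log q * (((M:ℝ) + 1) ^ 1 / γ ^ (M + 1)))) Filter.atTop
      (nhds (δ / γ + (-a) * 0 + Real.log q * 0)) :=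
    (tendsto_const_nhds.add ((h0 k).const_mul _)).add ((h0 1).const_mul _)
  have h2 : Filter.Tendsto (fun M : ℕ => γ ^ (M + 1)) Filter.atTop Filter.atTop :=
    (tendsto_pow_atTop_atTop_of_one_lt hγ).comp (Filter.tendsto_add_atTop_nat 1)
  have h3 := h2.atTop_mul_pos (C := δ / γ + (-a) * 0 + Real.log q * 0) (by
    have : 0 < δ / γ := by positivity
    simpa using this) h1
  have h4 := (Real.tendsto_exp_atTop.comp h3).const_mul_atTop (r := θ / q) (by positivity)
  refine h4.congr fun M => ?_
  have hg : γ ≠ 0 := by positivity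
  have : γ ^ (M + 1) * (δ / γ + (-a) * (((M:ℝ) + 1) ^ k / γ ^ (M + 1))
      + Real.log q * (((M:ℝ) + 1) ^ 1 / γ ^ (M + 1)))
      = δ * γ ^ M + (-(a * ((M:ℝ) + 1) ^ k)) + Real.log q * ((M + 1 : ℕ) : ℝ) := by
    push_cast
    field_simp
    ring
  simp only [Function.comp]
  rw [this, Real.exp_add, Real.exp_add, mul_comm (Real.log q), Real.exp_nat_mul, Real.exp_log hq]
  field_simp
  ring

lemma exists_E (α c T : ℝ) (hα : 1 < α) (hc : 1 < c) (hT : 0 < T) :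
    ∃ (E : ℝ) (m : ℕ), 2 ≤ E ∧ c ≤ E ∧ ∀ N : ℕ, 1 ≤ N → ∀ x : ℝ, E * (N:ℝ) ^ m ≤ x →
      x ^ ((α + 1) / 2) ≤ (T / N) * (x ^ α / c) - x := by
  set η := (α - 1) / 2 with hη
  have hη0 : 0 < η := by rw [hη]; linarith
  refine ⟨max (max 2 c) ((2 * c / T) ^ (1 / η)), ⌈1 / η⌉₊, le_max_of_le_left (le_max_left _ _),
    le_max_of_le_left (le_max_right _ _), ?_⟩
  intro N hN x hx
  set E := max (max 2 c) ((2 * c / T) ^ (1 / η)) with hE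
  have hE2 : 2 ≤ E := le_max_of_le_left (le_max_left _ _)
  have hN1 : (1:ℝ) ≤ N := by exact_mod_cast hN
  have hNpos : (0:ℝ) < N := by linarith
  have hc0 : 0 < c := by linarith
  have hNm : (1:ℝ) ≤ (N:ℝ) ^ ⌈1 / η⌉₊ := one_le_pow₀ hN1
  have hx1 : 1 ≤ x := by nlinarith
  have hx0 : 0 < x := by linarith
  have h1 : 2 * c / T * N ≤ x ^ η := by
    calc 2 * c / T * N = ((2 * c / T) ^ (1 / η)) ^ η * ((N:ℝ) ^ (1 / η)) ^ η := by
          rw [← Real.rpow_mul (by positivity), ← Real.rpow_mul (by positivity),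
            one_div_mul_cancel hη0.ne', Real.rpow_one, Real.rpow_one]
      _ ≤ E ^ η * ((N:ℝ) ^ ⌈1 / η⌉₊) ^ η := by
          have : (N:ℝ) ^ (1 / η) ≤ (N:ℝ) ^ ⌈1 / η⌉₊ := by
            rw [← Real.rpow_natCast]
            exact Real.rpow_le_rpow_of_exponent_le hN1 (Nat.le_ceil _)
          have : (2 * c / T) ^ (1 / η) ≤ E := le_max_right _ _
          gcongr
      _ = (E * (N:ℝ) ^ ⌈1 / η⌉₊) ^ η := by
          rw [Real.mul_rpow (by linarith) (by positivity)]
      _ ≤ x ^ η := by gcongr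
  have h2 : x ^ α = x ^ ((α + 1) / 2) * x ^ η := by
    rw [← Real.rpow_add hx0]; congr 1; rw [hη]; ring
  have h3 : x ≤ x ^ ((α + 1) / 2) := by
    conv_lhs => rw [← Real.rpow_one x]
    exact Real.rpow_le_rpow_of_exponent_le hx1 (by linarith)
  have h4 : 2 ≤ T / N * (x ^ η / c) := by
    have : 2 = T / N * ((2 * c / T * N) / c) := by field_simp
    rw [this]
    gcongr
  have h5 : T / N * (x ^ α / c) = x ^ ((α + 1) / 2) * (T / N * (x ^ η / c)) := by
    rw [h2]; ring
  rw [h5]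
  have : 0 < x ^ ((α + 1) / 2) := by positivity
  nlinarith

/-- Strong and numerically weak divergence of the Euler–Maruyama scheme for one-dimensional
SODEs with superlinearly growing coefficients (Theorem 2.1 of Hutzenthaler–Jentzen–Kloeden):
if `|μ(x)| + |σ(x)| ≥ |x|^α / c` outside `[-c, c]` and the initial value satisfies the stated
nondegeneracy condition, then the `p`-th absolute moments of the Euler approximations diverge
to infinity for every `p > 0`. -/
theorem euler_maruyama_divergence
    {Ω : Type*} [mΩ : MeasurableSpace Ω] (P : Measure Ω) [IsProbabilityMeasure P]
    (α β c T : ℝ) (hα : 1 < α) (hβ : 1 < β) (hc : 1 < c) (hT : 0 < T)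
    (ℱ : Filtration ℝ mΩ) (W : ℝ → Ω → ℝ)
    (hWadapted : ∀ t ∈ Set.Icc (0 : ℝ) T, Measurable[ℱ t] (W t))
    (hWcont : ∀ ω, ContinuousOn (fun t => W t ω) (Set.Icc (0 : ℝ) T))
    (hW0 : ∀ ω, W 0 ω = 0)
    (hWindep : ∀ s t : ℝ, 0 ≤ s → s ≤ t → t ≤ T →
        Indep (MeasurableSpace.comap (fun ω => W t ω - W s ω) inferInstance) (ℱ s) P)
    (hWlaw : ∀ s t : ℝ, 0 ≤ s → s ≤ t → t ≤ T →
        P.map (fun ω => W t ω - W s ω) = gaussianReal 0 (Real.toNNReal (t - s)))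
    (ξ : Ω → ℝ) (hξ : Measurable[ℱ 0] ξ)
    (μ σ : ℝ → ℝ) (hμ : Measurable μ) (hσ : Measurable σ)
    (Y : ℕ → ℕ → Ω → ℝ)
    (hY0 : ∀ N : ℕ, 1 ≤ N → Y N 0 = ξ)
    (hYrec : ∀ N : ℕ, 1 ≤ N → ∀ n < N, ∀ ω,
        Y N (n + 1) ω = Y N n ω + (T / N) * μ (Y N n ω)
          + σ (Y N n ω) * (W ((n + 1) * T / N) ω - W (n * T / N) ω))
    (hgrowth : ∀ x : ℝ, (x ≤ -c ∨ c ≤ x) → |x| ^ α / c ≤ |μ x| + |σ x|)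
    (hinit : 0 < P {ω | σ (ξ ω) ≠ 0} ∨
      ∀ x : ℝ, 1 ≤ x → ENNReal.ofReal (β ^ (-(x ^ β))) ≤ P {ω | x ≤ |ξ ω|})
    (p : ℝ) (hp : 0 < p) :
    Filter.Tendsto (fun N : ℕ => ∫⁻ ω, ENNReal.ofReal (|Y N N ω| ^ p) ∂P)
      Filter.atTop (nhds ⊤) := by
  -- basic data
  set γ : ℝ := (α + 1) / 2 with hγdef
  have hγ : 1 < γ := by rw [hγdef]; linarith
  obtain ⟨E, m, hE2, hEc, hE⟩ := exists_E α c T hα hc hT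
  set C0 : ℝ := (√(2 * π))⁻¹ with hC0
  have hC0pos : 0 < C0 := by positivity
  set q : ℝ := C0 * rexp (-(T + 1)) with hq
  have hqpos : 0 < q := by positivity
  set r : ℕ → ℝ := fun N => E * (N:ℝ) ^ m with hr
  have hr2 : ∀ N : ℕ, 1 ≤ N → E ≤ r N := by
    intro N hN
    have hN1 : (1:ℝ) ≤ N := by exact_mod_cast hN
    have : (1:ℝ) ≤ (N:ℝ) ^ m := one_le_pow₀ hN1
    simp only [hr]
    nlinarith
  -- times
  have htime : ∀ N n : ℕ, n < N → 0 ≤ (n:ℝ) * T / N ∧ (n:ℝ) * T / N ≤ ((n:ℝ) + 1) * T / N ∧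
      ((n:ℝ) + 1) * T / N ≤ T ∧ ((n:ℝ) + 1) * T / N - (n:ℝ) * T / N = T / N := by
    intro N n hn
    have hNpos : (0:ℝ) < N := by exact_mod_cast (Nat.zero_le n).trans_lt hn
    have hn' : (n:ℝ) + 1 ≤ N := by exact_mod_cast hn
    refine ⟨by positivity, by gcongr; linarith, ?_, by field_simp; ring⟩
    rw [div_le_iff₀ hNpos, mul_comm T]
    gcongr
  -- measurability
  have hYm : ∀ N : ℕ, 1 ≤ N → ∀ n : ℕ, n ≤ N → Measurable[ℱ ((n:ℝ) * T / N)] (Y N n) := by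
    intro N hN n
    induction n with
    | zero => intro _; rw [hY0 N hN]; exact hξ.mono (ℱ.mono (by simp)) le_rfl
    | succ n ih =>
      intro hn
      obtain ⟨h1, h2, h3, _⟩ := htime N n hn
      have ec : (((n + 1 : ℕ) : ℝ)) * T / N = ((n:ℝ) + 1) * T / N := by push_cast; rfl
      have e : Y N (n + 1) = fun ω => Y N n ω + (T / N) * μ (Y N n ω)
          + σ (Y N n ω) * (W ((n + 1) * T / N) ω - W (n * T / N) ω) := funext (hYrec N hN n hn)
      rw [e]
      have hy : Measurable[ℱ (((n:ℝ) + 1) * T / N)] (Y N n) := (ih (by omega)).mono (ℱ.mono h2) le_rfl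
      have hw1 := hWadapted (((n:ℝ) + 1) * T / N) ⟨h1.trans h2, h3⟩
      have hw0 := (hWadapted ((n:ℝ) * T / N) ⟨h1, h2.trans h3⟩).mono (ℱ.mono h2) le_rfl
      refine Measurable.mono ?_ (ℱ.mono ec.ge) le_rfl
      exact (hy.add ((hμ.comp hy).const_mul _)).add ((hσ.comp hy).mul (hw1.sub hw0))
  -- one step of the scheme
  have hstep : ∀ N : ℕ, 1 ≤ N → ∀ n < N, ∀ A : Set Ω, MeasurableSet[ℱ ((n:ℝ) * T / N)] A →
      ∀ y : ℝ, 0 ≤ y → ENNReal.ofReal (C0 * rexp (-(y ^ 2 / (T / N) + 1))) * P A ≤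
        P {ω | ω ∈ A ∧ |Y N n ω + (T / N) * μ (Y N n ω)| + |σ (Y N n ω)| * y ≤ |Y N (n + 1) ω|} := by
    intro N hN n hn A hA y hy
    obtain ⟨h1, h2, h3, h4⟩ := htime N n hn
    have hNpos : (0:ℝ) < N := by exact_mod_cast hN
    have hTN : 0 < T / N := by positivity
    have hy' := hYm N hN n hn.le
    have hΔ : Measurable (fun ω => W ((n + 1) * T / N) ω - W (n * T / N) ω) :=
      ((hWadapted _ ⟨h1.trans h2, h3⟩).mono (ℱ.le _) le_rfl).sub
        ((hWadapted _ ⟨h1, h2.trans h3⟩).mono (ℱ.le _) le_rfl)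
    have hl := hWlaw _ _ h1 h2 h3
    rw [h4] at hl
    have := one_step (ℱ ((n:ℝ) * T / N)) P (ℱ.le _) _
      (fun ω => Y N n ω + (T / N) * μ (Y N n ω)) (fun ω => σ (Y N n ω)) hΔ
      (hWindep _ _ h1 h2 h3) _ (Real.toNNReal_pos.2 hTN) hl
      (hy'.add ((hμ.comp hy').const_mul _)) (hσ.comp hy') A hA y hy
    rw [Real.coe_toNNReal _ hTN.le] at this
    simp only [hYrec N hN n hn]
    exact this
  -- growth step
  have hgrow : ∀ N : ℕ, 1 ≤ N → ∀ n < N, ∀ R : ℝ, r N ≤ R →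
      ENNReal.ofReal q * P {ω | R ≤ |Y N n ω|} ≤ P {ω | R ^ γ ≤ |Y N (n + 1) ω|} := by
    intro N hN n hn R hR
    have hN1 : (1:ℝ) ≤ N := by exact_mod_cast hN
    have hNpos : (0:ℝ) < N := by linarith
    have hTN : 0 < T / N := by positivity
    have hA : MeasurableSet[ℱ ((n:ℝ) * T / N)] {ω | R ≤ |Y N n ω|} := by
      have h0 := hYm N hN n hn.le
      have : Measurable[ℱ ((n:ℝ) * T / N)] (fun ω => |Y N n ω|) := measurable_abs.comp h0
      exact this measurableSet_Ici
    refine le_trans ?_ ((hstep N hN n hn _ hA (T / N) hTN.le).trans (measure_mono ?_))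
    · gcongr
      rw [hq]
      gcongr
      have : (T / N) ^ 2 / (T / N) = T / N := by field_simp
      rw [this]
      exact div_le_self hT.le hN1
    · rintro ω ⟨h1, h2⟩
      have h1 : R ≤ |Y N n ω| := h1
      refine le_trans ?_ h2
      set x := Y N n ω
      have hrx : r N ≤ |x| := hR.trans h1
      have hcx : c ≤ |x| := hEc.trans ((hr2 N hN).trans hrx)
      have hg := hgrowth x (by
        rcases le_abs.1 hcx with h | h
        · exact Or.inr h
        · exact Or.inl (by linarith))
      have h3 := hE N hN |x| hrx
      have h4 : R ^ γ ≤ |x| ^ γ := by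
        have : 0 ≤ R := by linarith [hr2 N hN]
        gcongr
      have h5 : |T / N * μ x| ≤ |x + T / N * μ x| + |x| := by
        have := abs_sub (x + T / N * μ x) x
        simpa using this
      rw [abs_mul, abs_of_pos hTN] at h5
      have h6 := mul_le_mul_of_nonneg_left hg hTN.le
      rw [mul_add] at h6
      rw [mul_comm |σ x|]
      linarith
  -- iteration
  have hiter : ∀ N : ℕ, 1 ≤ N → ∀ j : ℕ, 1 + j ≤ N →
      ENNReal.ofReal q ^ j * P {ω | r N ≤ |Y N 1 ω|} ≤
        P {ω | (r N) ^ (γ ^ j) ≤ |Y N (1 + j) ω|} := by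
    intro N hN j
    induction j with
    | zero => intro _; simp
    | succ j ih =>
      intro hj
      have hr1 : 1 ≤ r N := by linarith [hr2 N hN]
      have h1 := hgrow N hN (1 + j) (by omega) ((r N) ^ (γ ^ j)) (by
        conv_lhs => rw [← Real.rpow_one (r N)]
        exact Real.rpow_le_rpow_of_exponent_le hr1 (one_le_pow₀ hγ.le))
      rw [← Real.rpow_mul (by linarith), ← pow_succ] at h1
      refine le_trans ?_ h1
      rw [pow_succ', mul_assoc]
      gcongr
      exact ih (by omega)
  -- starting estimate
  have hstart : ∃ (θ a : ℝ) (k : ℕ), 0 < θ ∧ ∀ N : ℕ, 1 ≤ N →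
      ENNReal.ofReal (θ * rexp (-(a * (N:ℝ) ^ k))) ≤ P {ω | r N ≤ |Y N 1 ω|} := by
    rcases hinit with h | h
    · have hU : {ω | σ (ξ ω) ≠ 0} ⊆ ⋃ K : ℕ, {ω | 1 / ((K:ℝ) + 1) ≤ |σ (ξ ω)|} := by
        intro ω hω
        obtain ⟨K, hK⟩ := exists_nat_one_div_lt (abs_pos.2 hω)
        exact Set.mem_iUnion.2 ⟨K, hK.le⟩
      have : ∃ K : ℕ, P {ω | 1 / ((K:ℝ) + 1) ≤ |σ (ξ ω)|} ≠ 0 := by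
        by_contra! hcon
        exact absurd (measure_mono_null hU (measure_iUnion_null hcon)) h.ne'
      obtain ⟨K, hK⟩ := this
      set A : Set Ω := {ω | 1 / ((K:ℝ) + 1) ≤ |σ (ξ ω)|} with hAdef
      have hA : MeasurableSet[ℱ 0] A := by
        have : Measurable[ℱ 0] (fun ω => |σ (ξ ω)|) := measurable_abs.comp (hσ.comp hξ)
        exact this measurableSet_Ici
      have hPA : 0 < (P A).toReal := ENNReal.toReal_pos hK (measure_ne_top _ _)
      refine ⟨C0 * rexp (-1) * (P A).toReal, ((K:ℝ) + 1) ^ 2 * E ^ 2 / T, m * 2 + 1, by positivity, ?_⟩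
      intro N hN
      have hNpos : (0:ℝ) < N := by exact_mod_cast hN
      have hrp : 0 < r N := by linarith [hr2 N hN]
      have h1 := hstep N hN 0 (by omega) A (ℱ.mono (by simp) A hA) (((K:ℝ) + 1) * r N) (by positivity)
      refine le_trans (le_of_eq ?_) (h1.trans (measure_mono ?_))
      · conv_rhs => rw [← ENNReal.ofReal_toReal (measure_ne_top P A)]
        rw [← ENNReal.ofReal_mul (by positivity)]
        congr 1
        rw [neg_add, Real.exp_add]
        have : (((K:ℝ) + 1) * r N) ^ 2 / (T / N) = ((K:ℝ) + 1) ^ 2 * E ^ 2 / T * (N:ℝ) ^ (m * 2 + 1) := by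
          simp only [hr]
          rw [pow_succ (N:ℝ), pow_mul]
          field_simp
        rw [this]
        ring
      · rintro ω ⟨h2, h3⟩
        refine le_trans ?_ h3
        rw [hY0 N hN]
        have h2 : 1 / ((K:ℝ) + 1) ≤ |σ (ξ ω)| := h2
        have h4 : r N = 1 / ((K:ℝ) + 1) * (((K:ℝ) + 1) * r N) := by field_simp
        have h5 : 1 / ((K:ℝ) + 1) * (((K:ℝ) + 1) * r N) ≤ |σ (ξ ω)| * (((K:ℝ) + 1) * r N) := by
          gcongr
        have := abs_nonneg (ξ ω + T / N * μ (ξ ω))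
        linarith
    · refine ⟨q, Real.log β * E ^ ⌈β⌉₊, m * ⌈β⌉₊, hqpos, ?_⟩
      intro N hN
      have hr1 : 1 ≤ r N := by linarith [hr2 N hN]
      have h1 := hgrow N hN 0 (by omega) (r N) le_rfl
      rw [hY0 N hN] at h1
      have h2 : P {ω | r N ^ γ ≤ |Y N (0 + 1) ω|} ≤ P {ω | r N ≤ |Y N 1 ω|} := by
        apply measure_mono
        intro ω hω
        have hω : r N ^ γ ≤ |Y N (0 + 1) ω| := hω
        refine le_trans ?_ hω
        conv_lhs => rw [← Real.rpow_one (r N)]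
        exact Real.rpow_le_rpow_of_exponent_le hr1 hγ.le
      refine le_trans ?_ (h1.trans h2)
      rw [ENNReal.ofReal_mul hqpos.le]
      gcongr
      refine le_trans ?_ (h (r N) hr1)
      apply ENNReal.ofReal_le_ofReal
      rw [Real.rpow_def_of_pos (by linarith)]
      apply Real.exp_le_exp.2
      rw [mul_neg, neg_le_neg_iff, mul_assoc]
      have hl : 0 ≤ Real.log β := Real.log_nonneg hβ.le
      gcongr
      calc r N ^ β ≤ r N ^ (⌈β⌉₊ : ℝ) := Real.rpow_le_rpow_of_exponent_le hr1 (Nat.le_ceil _)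
        _ = E ^ ⌈β⌉₊ * (N:ℝ) ^ (m * ⌈β⌉₊) := by
          rw [Real.rpow_natCast]
          simp only [hr]
          rw [mul_pow, pow_mul]
  obtain ⟨θ, a, k, hθ, hst⟩ := hstart
  have hlim := final_limit θ a q (p * Real.log 2) γ k hθ hqpos
    (mul_pos hp (Real.log_pos one_lt_two)) hγ
  rw [← Filter.tendsto_add_atTop_iff_nat 1]
  refine tendsto_of_tendsto_of_tendsto_of_le_of_le
    (ENNReal.tendsto_ofReal_atTop.comp hlim) tendsto_const_nhds ?_ (fun _ => le_top)
  intro M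
  have h1 := hst (M + 1) (by omega)
  have h2 := hiter (M + 1) (by omega) M (by omega)
  have hrM := hr2 (M + 1) (by omega)
  set Z : ℝ := 2 ^ (γ ^ M) with hZ
  have hZpos : 0 < Z := by positivity
  have hsub : P {ω | (r (M + 1)) ^ (γ ^ M) ≤ |Y (M + 1) (1 + M) ω|} ≤
      P {ω | ENNReal.ofReal (Z ^ p) ≤ ENNReal.ofReal (|Y (M + 1) (M + 1) ω| ^ p)} := by
    apply measure_mono
    intro ω hω
    have hω : (r (M + 1)) ^ (γ ^ M) ≤ |Y (M + 1) (1 + M) ω| := hω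
    rw [add_comm 1 M] at hω
    apply ENNReal.ofReal_le_ofReal
    have : Z ≤ |Y (M + 1) (M + 1) ω| := by
      refine le_trans ?_ hω
      rw [hZ]
      gcongr
      linarith
    gcongr
  have hmark := mul_meas_ge_le_lintegral₀ (μ := P)
    (f := fun ω => ENNReal.ofReal (|Y (M + 1) (M + 1) ω| ^ p)) (by
      have h0 : Measurable (Y (M + 1) (M + 1)) :=
        (hYm (M + 1) (by omega) (M + 1) le_rfl).mono (ℱ.le _) le_rfl
      exact ((measurable_abs.comp h0).pow_const p).ennreal_ofReal.aemeasurable)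
    (ENNReal.ofReal (Z ^ p))
  refine le_trans ?_ hmark
  refine le_trans ?_ (mul_le_mul_right (h2.trans hsub) _)
  refine le_trans (le_of_eq ?_) (mul_le_mul_right (mul_le_mul_right h1 _) _)
  rw [← ENNReal.ofReal_pow hqpos.le, ← ENNReal.ofReal_mul (by positivity),
    ← ENNReal.ofReal_mul (by positivity)]
  simp only [Function.comp]
  congr 1
  have : Z ^ p = rexp (p * Real.log 2 * γ ^ M) := by
    rw [hZ, ← Real.rpow_mul (by norm_num), Real.rpow_def_of_pos (by norm_num)]
    congr 1
    ring
  rw [this]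
  push_cast
  ring
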